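/- Let k ≥ 2 be an integer, α = (1+√(1+4/k))/2, β = kα+1, b_n = ⌊nβ⌋, d_n = b_n − b_{n−1}. Fix i ∈ {1,…,k−1}. Then for all integers m ≥ 0 and n ≥ 1, the number of indices j with m < j ≤ m + g^i_n and d_j = k+1 equals either g^i_{n−1} or g^i_{n−1} − 1; no other value occurs. -/

import Mathlib

/-- α = (1 + √(1 + 4/k)) / 2 -/
noncomputable def alphaK (k : ℕ) : ℝ := (1 + Real.sqrt (1 + 4 / (k : ℝ))) / 2

/-- β = k·α + 1 -/
noncomputable def betaK (k : ℕ) : ℝ := (k : ℝ) * alphaK k + 1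

/-- a_n = ⌊n·α⌋ -/
noncomputable def aSeq (k n : ℕ) : ℤ := ⌊(n : ℝ) * alphaK k⌋

/-- b_n = ⌊n·β⌋ -/
noncomputable def bSeq (k n : ℕ) : ℤ := ⌊(n : ℝ) * betaK k⌋

/-- c_n = a_n − a_{n−1} (used for n ≥ 1) -/
noncomputable def cSeq (k n : ℕ) : ℤ := aSeq k n - aSeq k (n - 1)

/-- d_n = b_n − b_{n−1} (used for n ≥ 1) -/
noncomputable def dSeq (k n : ℕ) : ℤ := bSeq k n - bSeq k (n - 1)

/-- the pair (f^i_n, g^i_n): (f^i_0,g^i_0) = (0,i+1),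
    (f^i_n, g^i_n) = (f^i_{n−1} + g^i_{n−1}, k·f^i_{n−1} + (k+1)·g^i_{n−1} + i). -/
def fg (k i : ℕ) : ℕ → ℕ × ℕ
  | 0 => (0, i + 1)
  | n + 1 => ((fg k i n).1 + (fg k i n).2,
      k * (fg k i n).1 + (k + 1) * (fg k i n).2 + i)

/-!
The number `β = betaK k` is the dominant root of `x ^ 2 - (k + 2) * x + 1`. Among `L` consecutive
differences of `⌊n * β⌋`, the number of those equal to `⌊β⌋ = k + 1` differs from
`L * (⌊β⌋ + 1 - β) = L / β` by less than one. The recurrence satisfied by `g^i_n` has the same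
characteristic polynomial, so `g^i_n - g^i_{n+1} / β` is a constant multiple of `β⁻¹ ^ n`, and its
initial value places it in `[0, 1)`. For `L = g^i_{n+1}` the count is therefore an integer strictly
between `g^i_n - 2` and `g^i_n + 1`.
-/

section FloorDifferences

theorem card_filter_sub_pred_eq {b : ℕ → ℤ} {q : ℤ}
    (hb : ∀ n, b (n + 1) - b n = q ∨ b (n + 1) - b n = q + 1) (m L : ℕ) :
    (((Finset.Ioc m (m + L)).filter fun j => b j - b (j - 1) = q).card : ℤ) =
      (q + 1) * L - (b (m + L) - b m) := by
  rw [Finset.card_filter]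
  induction L with
  | zero => simp
  | succ L ih =>
    rw [← add_assoc, Finset.sum_Ioc_succ_top (Nat.le_add_right m L), Nat.cast_add, ih,
      Nat.add_sub_cancel]
    rcases hb (m + L) with h | h
    · rw [if_pos h]
      push_cast
      linear_combination h
    · rw [if_neg (by lia)]
      push_cast
      linear_combination h

variable {R : Type*} [Ring R] [LinearOrder R] [IsStrictOrderedRing R] [FloorRing R]

theorem floor_add_sub_floor_eq_or (a x : R) :
    ⌊a + x⌋ - ⌊a⌋ = ⌊x⌋ ∨ ⌊a + x⌋ - ⌊a⌋ = ⌊x⌋ + 1 := by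
  have lower := Int.le_floor_add a x
  have upper := Int.le_floor_add_floor a x
  lia

theorem abs_card_floor_mul_sub_lt_one (x : R) (m L : ℕ) :
    |(((Finset.Ioc m (m + L)).filter fun j : ℕ =>
        ⌊(j : R) * x⌋ - ⌊((j - 1 : ℕ) : R) * x⌋ = ⌊x⌋).card : R) - L * (⌊x⌋ + 1 - x)| < 1 := by
  have step (n : ℕ) : ⌊((n + 1 : ℕ) : R) * x⌋ - ⌊(n : R) * x⌋ = ⌊x⌋ ∨
      ⌊((n + 1 : ℕ) : R) * x⌋ - ⌊(n : R) * x⌋ = ⌊x⌋ + 1 := by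
    rw [Nat.cast_succ, add_one_mul]
    exact floor_add_sub_floor_eq_or _ _
  have count := congrArg (Int.cast : ℤ → R)
    (card_filter_sub_pred_eq (b := fun n => ⌊(n : R) * x⌋) step m L)
  push_cast at count
  rw [count]
  have error : (⌊x⌋ + 1) * L - (⌊((m : R) + L) * x⌋ - ⌊(m : R) * x⌋) - L * (⌊x⌋ + 1 - x) =
      Int.fract (((m : R) + L) * x) - Int.fract ((m : R) * x) := by
    rw [Int.fract, Int.fract, (Nat.commute_cast (⌊x⌋ + 1 : R) L).eq]
    noncomm_ring
  rw [error]
  exact abs_sub_lt_of_nonneg_of_lt (Int.fract_nonneg _) (Int.fract_lt_one _)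
    (Int.fract_nonneg _) (Int.fract_lt_one _)

end FloorDifferences

section Beta

variable {k : ℕ}

theorem one_lt_alphaK (hk : 1 ≤ k) : 1 < alphaK k := by
  have : 1 < √(1 + 4 / (k : ℝ)) := by
    rw [Real.lt_sqrt zero_le_one, one_pow, lt_add_iff_pos_right]
    positivity
  rw [alphaK]
  linarith

theorem mul_alphaK_sq (hk : 1 ≤ k) : k * alphaK k ^ 2 = betaK k := by
  have hsq : √(1 + 4 / (k : ℝ)) ^ 2 = 1 + 4 / k := Real.sq_sqrt (by positivity)
  have hdiv : (k : ℝ) * (4 / k) = 4 := mul_div_cancel₀ 4 (by positivity)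
  rw [betaK, alphaK]
  linear_combination (k : ℝ) / 4 * hsq + hdiv / 4

theorem add_one_lt_betaK (hk : 1 ≤ k) : k + 1 < betaK k := by
  rw [betaK, add_lt_add_iff_right]
  exact lt_mul_of_one_lt_right (by positivity) (one_lt_alphaK hk)

theorem betaK_pos (k : ℕ) : 0 < betaK k := by
  rw [betaK, alphaK]
  positivity

theorem betaK_add_inv (hk : 1 ≤ k) : betaK k + (betaK k)⁻¹ = k + 2 := by
  have hmul : betaK k * (k + 2 - betaK k) = 1 := by
    have h := mul_alphaK_sq hk
    rw [betaK] at h ⊢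
    linear_combination -(k : ℝ) * h
  rw [inv_eq_of_mul_eq_one_right hmul]
  ring

theorem floor_betaK (hk : 1 ≤ k) : ⌊betaK k⌋ = k + 1 := by
  rw [Int.floor_eq_iff]
  push_cast
  have hinv : 0 < (betaK k)⁻¹ := inv_pos.2 (betaK_pos k)
  constructor <;> linarith [add_one_lt_betaK hk, betaK_add_inv hk]

theorem abs_card_dSeq_sub_div_lt_one (hk : 1 ≤ k) (m L : ℕ) :
    |(((Finset.Ioc m (m + L)).filter fun j => dSeq k j = (k : ℤ) + 1).card : ℝ) -
      L / betaK k| < 1 := by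
  have hinv : (⌊betaK k⌋ : ℝ) + 1 - betaK k = (betaK k)⁻¹ := by
    rw [floor_betaK hk]
    push_cast
    linear_combination -betaK_add_inv hk
  have h := abs_card_floor_mul_sub_lt_one (betaK k) m L
  rw [hinv, floor_betaK hk] at h
  exact h

end Beta

section Recurrence

theorem sub_mul_eq_pow_mul_of_recurrence {R : Type*} [CommRing R] {u : ℕ → R} {x y : R}
    (hu : ∀ n, u (n + 2) = (x + y) * u (n + 1) - x * y * u n) (n : ℕ) :
    u (n + 1) - x * u n = y ^ n * (u 1 - x * u 0) := by
  induction n with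
  | zero => ring
  | succ n ih =>
    rw [hu, pow_succ]
    linear_combination y * ih

theorem fg_snd_add_two (k i n : ℕ) :
    (fg k i (n + 2)).2 + (fg k i n).2 = (k + 2) * (fg k i (n + 1)).2 := by
  simp only [fg]
  ring

theorem betaK_mul_fg_snd_sub {k : ℕ} (hk : 1 ≤ k) (i n : ℕ) :
    betaK k * (fg k i n).2 - (fg k i (n + 1)).2 =
      (betaK k)⁻¹ ^ n * (1 - (i + 1) / betaK k) := by
  have hinv : betaK k * (betaK k)⁻¹ = 1 := mul_inv_cancel₀ (betaK_pos k).ne'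
  have hrec (n : ℕ) : ((fg k i (n + 2)).2 : ℝ) =
      (betaK k + (betaK k)⁻¹) * (fg k i (n + 1)).2 -
        betaK k * (betaK k)⁻¹ * (fg k i n).2 := by
    rw [hinv, betaK_add_inv hk, one_mul, eq_sub_iff_add_eq]
    exact_mod_cast fg_snd_add_two k i n
  have hsol := sub_mul_eq_pow_mul_of_recurrence (u := fun n => ((fg k i n).2 : ℝ)) hrec n
  have hinit : ((fg k i 1).2 : ℝ) - betaK k * (fg k i 0).2 = (i + 1) / betaK k - 1 := by
    simp only [fg]
    push_cast
    linear_combination -((i : ℝ) + 1) * betaK_add_inv hk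
  rw [hinit] at hsol
  linear_combination -hsol

theorem fg_snd_succ_div_betaK_mem_Ioc {k i : ℕ} (hk : 1 ≤ k) (hik : i ≤ k) (n : ℕ) :
    (fg k i (n + 1)).2 / betaK k ∈ Set.Ioc ((fg k i n).2 - 1 : ℝ) (fg k i n).2 := by
  have hβ := betaK_pos k
  have hβ_gt := add_one_lt_betaK hk
  have hik' : (i : ℝ) ≤ k := by exact_mod_cast hik
  have hpow : 0 < (betaK k)⁻¹ ^ n := by positivity
  have hpow_le : (betaK k)⁻¹ ^ n ≤ 1 :=
    pow_le_one₀ (by positivity) (inv_le_one_of_one_le₀ (by linarith))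
  have hinit : 0 ≤ 1 - (i + 1) / betaK k := sub_nonneg.2 ((div_le_one hβ).2 (by linarith))
  have hinit_le : 1 - (i + 1) / betaK k ≤ 1 := sub_le_self _ (by positivity)
  have hsub := betaK_mul_fg_snd_sub hk i n
  have hsub_nonneg := mul_nonneg hpow.le hinit
  have hsub_le := mul_le_one₀ hpow_le hinit hinit_le
  rw [Set.mem_Ioc, lt_div_iff₀ hβ, div_le_iff₀ hβ]
  constructor <;> linarith

end Recurrence

theorem factor_sigma_count_general {k i : ℕ} (hk : 1 ≤ k) (hik : i ≤ k) (m n : ℕ) :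
    ((Finset.Ioc m (m + (fg k i (n + 1)).2)).filter
        fun j => dSeq k j = (k : ℤ) + 1).card = (fg k i n).2 ∨
    ((Finset.Ioc m (m + (fg k i (n + 1)).2)).filter
        fun j => dSeq k j = (k : ℤ) + 1).card + 1 = (fg k i n).2 := by
  set c := ((Finset.Ioc m (m + (fg k i (n + 1)).2)).filter
    fun j => dSeq k j = (k : ℤ) + 1).card
  obtain ⟨hlower, hupper⟩ := abs_lt.1 (abs_card_dSeq_sub_div_lt_one hk m (fg k i (n + 1)).2)
  obtain ⟨hdiv_gt, hdiv_le⟩ := fg_snd_succ_div_betaK_mem_Ioc hk hik n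
  have hc_lt : c < (fg k i n).2 + 1 := by
    have : (c : ℝ) < (fg k i n).2 + 1 := by linarith
    exact_mod_cast this
  have hc_gt : (fg k i n).2 < c + 2 := by
    have : ((fg k i n).2 : ℝ) < c + 2 := by linarith
    exact_mod_cast this
  lia

/-- Any factor of length g^i_n contains either g^i_{n−1} or g^i_{n−1} − 1
    indices j with d_j = k+1; no other value occurs. -/
theorem factor_sigma_count (k : ℕ) (hk : 2 ≤ k) (i : ℕ) (hi1 : 1 ≤ i)
    (hik : i ≤ k - 1) (m n : ℕ) (hn : 1 ≤ n) :
    ((Finset.Ioc m (m + (fg k i n).2)).filter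
        (fun j => dSeq k j = (k : ℤ) + 1)).card = (fg k i (n - 1)).2 ∨
    ((Finset.Ioc m (m + (fg k i n).2)).filter
        (fun j => dSeq k j = (k : ℤ) + 1)).card = (fg k i (n - 1)).2 - 1 := by
  obtain ⟨n, rfl⟩ := Nat.exists_eq_add_of_le' hn
  exact (factor_sigma_count_general (by lia) (by lia) m n).imp_right Nat.eq_sub_of_add_eq
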